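/- Let $A > 1$, $\delta_0 > 0$, and $(1+A)/(2A) < \lambda < 1$. Then the planar system $\dot{y} = \mu - y - A|1-y|y$, $\dot{\mu} = \delta_0(\lambda - y)$ admits a nonconstant periodic solution: there exist $T > 0$ and a nonconstant differentiable function $\gamma : \mathbb{R} \to \mathbb{R}^2$ with $\gamma'(t) = (\gamma_2(t) - \gamma_1(t) - A|1 - \gamma_1(t)|\gamma_1(t), \; \delta_0(\lambda - \gamma_1(t)))$ and $\gamma(t + T) = \gamma(t)$ for all $t \in \mathbb{R}$. -/

import Mathlib

/-!
In the coordinates `x = y - λ`, `w = μ - F_A(λ)` the slow Stommel system is a Liénard system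
`ẋ = w - f x`, `ẇ = -δ₀ x`, whose damping `x * f x` is nonpositive near `0` and at least `|x|` far
from `0`. The energy `δ₀ x² / 2 + w² / 2` changes at rate `-δ₀ x f x`, so orbits cannot descend
through its small level sets. Far out this rate vanishes on the `w`-axis, but subtracting
`h x * w` for a small bounded increasing `h` gives an energy that does not increase outside a
compact set. A large sublevel set of the second energy minus a small one of the first is thus a
compact forward invariant annulus. Orbits in it keep turning around the origin and cross the
`w`-axis transversally, so following an orbit for two half-turns is a continuous self-map of the
segment in which the annulus meets the positive `w`-axis. The intermediate value theorem gives this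
map a fixed point, through which the orbit is periodic.
-/

open Set Filter Topology NNReal Metric Function

/-! ### Global flows of Lipschitz fields -/

section GlobalFlow

variable {E : Type*} [NormedAddCommGroup E] [NormedSpace ℝ E] {v : E → E} {K : ℝ≥0}

lemma eqOn_of_isIntegralCurveOn_Ioo_of_lipschitzWith (hv : LipschitzWith K v) {α β : ℝ → E}
    {a : ℝ} (hα : IsIntegralCurveOn α (fun _ => v) (Ioo (-a) a))
    (hβ : IsIntegralCurveOn β (fun _ => v) (Ioo (-a) a)) (h0 : α 0 = β 0) :
    EqOn α β (Ioo (-a) a) := by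
  rcases (Ioo (-a) a).eq_empty_or_nonempty with hempty | ⟨t, ht⟩
  · simp [hempty]
  have h0_mem : (0 : ℝ) ∈ Ioo (-a) a := by constructor <;> linarith [ht.1, ht.2]
  exact ODE_solution_unique_of_mem_Ioo (fun _ _ => hv.lipschitzOnWith (s := univ)) h0_mem
    (fun t ht => ⟨(hα t ht).hasDerivAt (isOpen_Ioo.mem_nhds ht), mem_univ _⟩)
    (fun t ht => ⟨(hβ t ht).hasDerivAt (isOpen_Ioo.mem_nhds ht), mem_univ _⟩) h0

lemma exists_isIntegralCurve_of_forall_Ioo (hv : LipschitzWith K v) {p : E}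
    (h : ∀ a : ℝ, ∃ α : ℝ → E, α 0 = p ∧ IsIntegralCurveOn α (fun _ => v) (Ioo (-a) a)) :
    ∃ γ : ℝ → E, γ 0 = p ∧ IsIntegralCurve γ (fun _ => v) := by
  choose α hα0 hα using h
  have hagree {a b t : ℝ} (ha : |t| < a) (hb : |t| < b) : α a t = α b t := by
    have hmono {c : ℝ} (hc : min a b ≤ c) :
        IsIntegralCurveOn (α c) (fun _ => v) (Ioo (-min a b) (min a b)) :=
      (hα c).mono (Ioo_subset_Ioo (neg_le_neg hc) hc)
    exact eqOn_of_isIntegralCurveOn_Ioo_of_lipschitzWith hv (hmono (min_le_left a b))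
      (hmono (min_le_right a b)) (by rw [hα0, hα0]) (abs_lt.1 (lt_min ha hb))
  refine ⟨fun t => α (|t| + 1) t, hα0 _, fun t => ?_⟩
  have ht : |t| < |t| + 1 := lt_add_one _
  have hmem : Ioo (-(|t| + 1)) (|t| + 1) ∈ 𝓝 t := isOpen_Ioo.mem_nhds (abs_lt.1 ht)
  refine ((hα _ t (abs_lt.1 ht)).hasDerivAt hmem).congr_of_eventuallyEq ?_
  filter_upwards [hmem] with s hs using hagree (lt_add_one _) (abs_lt.2 hs)

lemma exists_isIntegralCurve_of_lipschitzWith_of_bounded [CompleteSpace E]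
    (hv : LipschitzWith K v) (hbdd : Bornology.IsBounded (range v)) (p : E) :
    ∃ γ : ℝ → E, γ 0 = p ∧ IsIntegralCurve γ (fun _ => v) := by
  obtain ⟨L, -, hL⟩ := hbdd.exists_pos_norm_le
  have hL (x : E) : ‖v x‖ ≤ L.toNNReal := (hL _ (mem_range_self x)).trans L.le_coe_toNNReal
  refine exists_isIntegralCurve_of_forall_Ioo hv fun a => ?_
  have h0 : (0 : ℝ) ∈ Icc (-|a|) |a| := ⟨neg_nonpos.2 (abs_nonneg a), abs_nonneg a⟩
  have hpl : IsPicardLindelof (fun _ : ℝ => v) (⟨0, h0⟩ : Icc (-|a|) |a|) p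
      (L.toNNReal * Real.nnabs a) 0 L.toNNReal K :=
    ⟨fun _ _ => hv.lipschitzOnWith, fun _ _ => continuousOn_const, fun _ _ x _ => hL x, by simp⟩
  obtain ⟨α, hα0, hα⟩ := hpl.exists_eq_forall_mem_Icc_hasDerivWithinAt₀
  have hsub : Ioo (-a) a ⊆ Icc (-|a|) |a| :=
    fun t ht => ⟨by linarith [ht.1, le_abs_self a], by linarith [ht.2, le_abs_self a]⟩
  exact ⟨α, hα0, fun t ht => (hα t (hsub ht)).mono hsub⟩

lemma dist_le_of_isIntegralCurve_of_nonneg (hv : LipschitzWith K v) {α β : ℝ → E}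
    (hα : IsIntegralCurve α (fun _ => v)) (hβ : IsIntegralCurve β (fun _ => v)) {t : ℝ}
    (ht : 0 ≤ t) : dist (α t) (β t) ≤ dist (α 0) (β 0) * Real.exp (K * t) := by
  simpa using dist_le_of_trajectories_ODE (fun _ => hv) hα.continuous.continuousOn
    (fun s _ => (hα s).hasDerivWithinAt) hβ.continuous.continuousOn
    (fun s _ => (hβ s).hasDerivWithinAt) le_rfl t ⟨ht, le_rfl⟩

lemma dist_le_of_isIntegralCurve (hv : LipschitzWith K v) {α β : ℝ → E}
    (hα : IsIntegralCurve α (fun _ => v)) (hβ : IsIntegralCurve β (fun _ => v)) (t : ℝ) :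
    dist (α t) (β t) ≤ dist (α 0) (β 0) * Real.exp (K * |t|) := by
  rcases le_total 0 t with ht | ht
  · rw [abs_of_nonneg ht]
    exact dist_le_of_isIntegralCurve_of_nonneg hv hα hβ ht
  · have hreverse {γ : ℝ → E} (hγ : IsIntegralCurve γ (fun _ => v)) :
        IsIntegralCurve (fun s => γ (-s)) (fun _ x => -v x) := fun s => by
      simpa [comp_def] using (hγ (-s)).scomp s (hasDerivAt_neg s)
    rw [abs_of_nonpos ht]
    simpa using dist_le_of_isIntegralCurve_of_nonneg hv.neg (hreverse hα) (hreverse hβ)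
      (neg_nonneg.2 ht)

lemma continuous_uncurry_of_isIntegralCurve (hv : LipschitzWith K v) {φ : ℝ → E → E}
    (hφ0 : ∀ p, φ 0 p = p) (hφ : ∀ p, IsIntegralCurve (fun t => φ t p) (fun _ => v)) :
    Continuous (uncurry φ) := by
  refine continuous_iff_continuousAt.2 fun ⟨t, p⟩ => tendsto_iff_dist_tendsto_zero.2 ?_
  have hcont : Continuous (fun s => φ s p) := (hφ p).continuous
  have hbound (z : ℝ × E) : dist (uncurry φ z) (φ t p) ≤
      dist z.2 p * Real.exp (K * |z.1|) + dist (φ z.1 p) (φ t p) := by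
    have := dist_le_of_isIntegralCurve hv (hφ z.2) (hφ p) z.1
    rw [hφ0, hφ0] at this
    exact (dist_triangle _ (φ z.1 p) _).trans (by gcongr; exact this)
  have hlim : Continuous fun z : ℝ × E =>
      dist z.2 p * Real.exp (K * |z.1|) + dist (φ z.1 p) (φ t p) := by fun_prop
  exact squeeze_zero (fun _ => dist_nonneg) hbound (by simpa using hlim.tendsto (t, p))

lemma exists_flow_of_lipschitzWith_of_bounded [CompleteSpace E] (hv : LipschitzWith K v)
    (hbdd : Bornology.IsBounded (range v)) :
    ∃ φ : Flow ℝ E, ∀ p, IsIntegralCurve (fun t => φ t p) (fun _ => v) := by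
  choose γ hγ0 hγ using exists_isIntegralCurve_of_lipschitzWith_of_bounded hv hbdd
  have hadd (t₁ t₂ : ℝ) (p : E) : γ p (t₁ + t₂) = γ (γ p t₂) t₁ := by
    have := dist_le_of_isIntegralCurve hv ((hγ p).comp_add t₂) (hγ (γ p t₂)) t₁
    simpa [hγ0] using this
  exact ⟨⟨fun t p => γ p t, continuous_uncurry_of_isIntegralCurve hv hγ0 hγ, hadd, hγ0⟩, hγ⟩

-- Precomposing the field with the retraction makes it globally Lipschitz and bounded.
lemma exists_flow_of_lipschitzOnWith_of_retraction [CompleteSpace E] {s : Set E} {r : E → E}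
    {C : ℝ≥0} (hv : LipschitzOnWith K v s) (hs : Bornology.IsBounded s) (hr : LipschitzWith C r)
    (hr_mem : ∀ x, r x ∈ s) (hr_id : EqOn r id s) :
    ∃ φ : Flow ℝ E, (∀ p, Differentiable ℝ fun t => φ t p) ∧
      ∀ p t, φ t p ∈ s → HasDerivAt (fun t => φ t p) (v (φ t p)) t := by
  have hvr : LipschitzWith (K * C) (v ∘ r) :=
    lipschitzOnWith_univ.1 (hv.comp hr.lipschitzOnWith fun x _ => hr_mem x)
  have hrange : range (v ∘ r) ⊆ (v ∘ r) '' s := by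
    rintro _ ⟨x, rfl⟩
    exact ⟨r x, hr_mem x, congrArg v (hr_id (hr_mem x))⟩
  obtain ⟨φ, hφ⟩ :=
    exists_flow_of_lipschitzWith_of_bounded hvr ((hvr.isBounded_image hs).subset hrange)
  refine ⟨φ, fun p t => (hφ p t).differentiableAt, fun p t hmem => ?_⟩
  simpa only [comp_apply, hr_id hmem, id] using hφ p t

end GlobalFlow

lemma exists_lipschitzWith_retraction_closedBall {R : ℝ} (hR : 0 ≤ R) :
    ∃ r : ℝ × ℝ → ℝ × ℝ, LipschitzWith 1 r ∧ (∀ p, r p ∈ closedBall 0 R) ∧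
      EqOn r id (closedBall 0 R) := by
  have hclamp : LipschitzWith 1 fun x : ℝ => max (-R) (min R x) :=
    (LipschitzWith.id.const_min R).const_max (-R)
  have hball (p : ℝ × ℝ) : p ∈ closedBall 0 R ↔ (-R ≤ p.1 ∧ p.1 ≤ R) ∧ -R ≤ p.2 ∧ p.2 ≤ R := by
    rw [mem_closedBall_zero_iff, Prod.norm_def, max_le_iff, Real.norm_eq_abs, Real.norm_eq_abs,
      abs_le, abs_le]
  refine ⟨fun p => (max (-R) (min R p.1), max (-R) (min R p.2)), ?_, ?_, ?_⟩
  · simpa using (hclamp.comp LipschitzWith.prod_fst).prodMk (hclamp.comp LipschitzWith.prod_snd)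
  · intro p
    simp [hball, hR]
  · intro p hp
    obtain ⟨⟨h₁, h₂⟩, h₃, h₄⟩ := (hball p).1 hp
    simp [*]

/-! ### First zeros depending continuously on a parameter -/

section FirstZero

/-- `IsFirstZero g τ` says that `τ` is the first zero of `g` in `(0, ∞)` and that `g` is positive
before it. -/
def IsFirstZero (g : ℝ → ℝ) (τ : ℝ) : Prop :=
  0 < τ ∧ g τ = 0 ∧ ∀ t ∈ Ioo 0 τ, 0 < g t

lemma exists_isFirstZero {g : ℝ → ℝ} (hg : Continuous g) (hpos : ∀ᶠ t in 𝓝[>] 0, 0 < g t)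
    (hreturn : ∃ t > 0, g t ≤ 0) : ∃ τ, IsFirstZero g τ := by
  obtain ⟨ε, hε, hgε⟩ := mem_nhdsGT_iff_exists_Ioo_subset.1 hpos
  obtain ⟨t₀, ht₀, hgt₀⟩ := hreturn
  rw [mem_Ioi] at hε
  set Z : Set ℝ := Ici ε ∩ g ⁻¹' Iic 0
  have hZ_bdd : BddBelow Z := ⟨ε, fun t ht => ht.1⟩
  have hZ_mem : t₀ ∈ Z := ⟨not_lt.1 fun h => hgt₀.not_gt (hgε ⟨ht₀, h⟩), hgt₀⟩
  obtain ⟨hετ, hgτ⟩ : sInf Z ∈ Z :=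
    (isClosed_Ici.inter (isClosed_Iic.preimage hg)).csInf_mem ⟨t₀, hZ_mem⟩ hZ_bdd
  have hτ : 0 < sInf Z := hε.trans_le hετ
  have hbefore : ∀ t ∈ Ioo 0 (sInf Z), 0 < g t := fun t ht => by
    rcases lt_or_ge t ε with h | h
    · exact hgε ⟨ht.1, h⟩
    · exact not_le.1 fun hgt => notMem_of_lt_csInf ht.2 hZ_bdd ⟨h, hgt⟩
  refine ⟨sInf Z, hτ, le_antisymm hgτ ?_, hbefore⟩
  refine ge_of_tendsto (hg.continuousWithinAt (s := Iio (sInf Z))) ?_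
  filter_upwards [Ioo_mem_nhdsLT hτ] with t ht using (hbefore t ht).le

lemma IsFirstZero.le_of_nonpos {g : ℝ → ℝ} {τ t : ℝ} (hτ : IsFirstZero g τ) (ht : 0 < t)
    (hgt : g t ≤ 0) : τ ≤ t :=
  not_lt.1 fun h => hgt.not_gt (hτ.2.2 t ⟨ht, h⟩)

lemma IsFirstZero.hasDerivAt_nonpos {g : ℝ → ℝ} {τ g' : ℝ} (hτ : IsFirstZero g τ)
    (hg : HasDerivAt g g' τ) : g' ≤ 0 := by
  refine le_of_tendsto (hasDerivAt_iff_tendsto_slope_left_right.1 hg).1 ?_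
  filter_upwards [Ioo_mem_nhdsLT hτ.1] with t ht
  rw [slope_def_field, hτ.2.1, sub_zero]
  exact div_nonpos_of_nonneg_of_nonpos (hτ.2.2 t ht).le (sub_nonpos.2 ht.2.le)

variable {S : Type*} [TopologicalSpace S] {u u' : S → ℝ → ℝ}

lemma exists_eventually_forall_Ioo_pos (hu' : Continuous (uncurry u'))
    (hderiv : ∀ s, ∀ t ≥ 0, HasDerivAt (u s) (u' s t) t) (hu0 : ∀ s, u s 0 = 0) {s₀ : S}
    (hs₀ : 0 < u' s₀ 0) : ∃ ε > 0, ∀ᶠ s in 𝓝 s₀, ∀ t ∈ Ioo 0 ε, 0 < u s t := by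
  have hnhds : ∀ᶠ z in 𝓝 s₀ ×ˢ 𝓝 (0 : ℝ), 0 < uncurry u' z := by
    rw [← nhds_prod_eq]
    exact hu'.continuousAt.eventually (lt_mem_nhds hs₀)
  obtain ⟨P, hP, Q, hQ, hPQ⟩ := eventually_prod_iff.1 hnhds
  obtain ⟨ε, hε, hball⟩ := Metric.eventually_nhds_iff.1 hQ
  refine ⟨ε, hε, hP.mono fun s hs t ht => ?_⟩
  have hmono : StrictMonoOn (u s) (Icc 0 t) := by
    refine strictMonoOn_of_deriv_pos (convex_Icc 0 t)
      (fun r hr => (hderiv s r hr.1).continuousAt.continuousWithinAt) fun r hr => ?_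
    rw [interior_Icc] at hr
    rw [(hderiv s r hr.1.le).deriv]
    refine hPQ hs (hball ?_)
    rw [Real.dist_0_eq_abs, abs_of_pos hr.1]
    exact hr.2.trans ht.2
  simpa [hu0] using hmono (left_mem_Icc.2 ht.1.le) (right_mem_Icc.2 ht.1.le) ht.1

lemma continuous_of_isFirstZero (hu : Continuous (uncurry u)) (hu' : Continuous (uncurry u'))
    (hderiv : ∀ s, ∀ t ≥ 0, HasDerivAt (u s) (u' s t) t) (hu0 : ∀ s, u s 0 = 0)
    (hu0' : ∀ s, 0 < u' s 0) {τ : S → ℝ} (hτ : ∀ s, IsFirstZero (u s) (τ s))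
    (hτ' : ∀ s, u' s (τ s) < 0) : Continuous τ := by
  refine continuous_iff_continuousAt.2 fun s₀ => tendsto_order.2 ⟨fun a ha => ?_, fun b hb => ?_⟩
  · obtain ⟨ε, hε, hnear⟩ := exists_eventually_forall_Ioo_pos hu' hderiv hu0 (hu0' s₀)
    have hmiddle : ∀ᶠ s in 𝓝 s₀, ∀ t ∈ Icc ε a, 0 < u s t :=
      isCompact_Icc.eventually_forall_of_forall_eventually fun t ht =>
        hu.continuousAt.eventually
          (lt_mem_nhds ((hτ s₀).2.2 t ⟨hε.trans_le ht.1, ht.2.trans_lt ha⟩))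
    filter_upwards [hnear, hmiddle] with s hs_near hs_middle
    by_contra! hle
    refine (hτ s).2.1.not_gt ?_
    rcases lt_or_ge (τ s) ε with h | h
    · exact hs_near _ ⟨(hτ s).1, h⟩
    · exact hs_middle _ ⟨h, hle⟩
  · have hneg : ∀ᶠ t in 𝓝[>] τ s₀, u s₀ t < 0 := by
      have := (hasDerivAt_iff_tendsto_slope_left_right.1
        (hderiv s₀ (τ s₀) (hτ s₀).1.le)).2.eventually (gt_mem_nhds (hτ' s₀))
      filter_upwards [this, self_mem_nhdsWithin] with t ht htτ
      rw [slope_def_field, (hτ s₀).2.1, sub_zero] at ht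
      exact (div_neg_iff.1 ht).resolve_left (fun h => h.2.not_gt (sub_pos.2 htτ)) |>.1
    obtain ⟨t, hut, hτt, htb⟩ := (hneg.and (Ioo_mem_nhdsGT hb)).exists
    filter_upwards [(hu.uncurry_right t).continuousAt.eventually (gt_mem_nhds hut)] with s hs
    exact ((hτ s).le_of_nonpos ((hτ s₀).1.trans hτt) hs.le).trans_lt htb

theorem exists_continuous_isFirstZero (hu : Continuous (uncurry u))
    (hu' : Continuous (uncurry u')) (hderiv : ∀ s, ∀ t ≥ 0, HasDerivAt (u s) (u' s t) t)
    (hu0 : ∀ s, u s 0 = 0) (hu0' : ∀ s, 0 < u' s 0)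
    (htransverse : ∀ s, ∀ t > 0, u s t = 0 → u' s t ≠ 0) (hreturn : ∀ s, ∃ t > 0, u s t ≤ 0) :
    ∃ τ : S → ℝ, Continuous τ ∧ ∀ s, IsFirstZero (u s) (τ s) ∧ u' s (τ s) < 0 := by
  have hfirst (s : S) : ∃ τ, IsFirstZero (u s) τ := by
    obtain ⟨ε, hε, hpos⟩ := exists_eventually_forall_Ioo_pos hu' hderiv hu0 (hu0' s)
    refine exists_isFirstZero (hu.uncurry_left s) ?_ (hreturn s)
    filter_upwards [Ioo_mem_nhdsGT hε] using hpos.self_of_nhds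
  choose τ hτ using hfirst
  have hτ' (s : S) : u' s (τ s) < 0 :=
    ((hτ s).hasDerivAt_nonpos (hderiv s _ (hτ s).1.le)).lt_of_ne
      (htransverse s _ (hτ s).1 (hτ s).2.1)
  exact ⟨τ, continuous_of_isFirstZero hu hu' hderiv hu0 hu0' hτ hτ', fun s => ⟨hτ s, hτ' s⟩⟩

end FirstZero

/-! ### Monotone quantities along orbits -/

lemma exists_mem_forall_flow_eq_of_antitoneOn {X : Type*} [TopologicalSpace X] (φ : Flow ℝ X)
    {V : X → ℝ} (hV : Continuous V) {N : Set X} (hN : IsCompact N) {q : X}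
    (hq : ∀ t ≥ 0, φ t q ∈ N) (hanti : AntitoneOn (fun t => V (φ t q)) (Ici 0)) :
    ∃ p ∈ N, ∀ t, V (φ t p) = V p := by
  obtain ⟨p, hpN, hp⟩ := hN.exists_mapClusterPt_of_frequently
    ((eventually_ge_atTop (0 : ℝ)).mono hq).frequently
  obtain ⟨l, hl⟩ : ∃ l, Tendsto (fun t => V (φ t q)) atTop (𝓝 l) := by
    have hanti' : Antitone fun t => V (φ (max t 0) q) := fun s t hst =>
      hanti (le_max_right s 0) (le_max_right t 0) (max_le_max_right 0 hst)
    have hbdd : BddBelow (range fun t => V (φ (max t 0) q)) :=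
      (hN.bddBelow_image hV.continuousOn).mono <| range_subset_iff.2 fun t =>
        mem_image_of_mem V (hq _ (le_max_right t 0))
    refine ⟨_, (tendsto_atTop_ciInf hanti' hbdd).congr' ?_⟩
    filter_upwards [eventually_ge_atTop 0] with t ht
    rw [max_eq_left ht]
  have hconst (s : ℝ) : V (φ s p) = l := by
    have hcluster : MapClusterPt (V (φ s p)) atTop fun t => V (φ s (φ t q)) :=
      hp.continuousAt_comp (f := V ∘ φ s) (hV.comp (φ.continuous_toFun s)).continuousAt
    have hlim : Tendsto (fun t => V (φ s (φ t q))) atTop (𝓝 l) := by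
      simpa only [comp_def, id, φ.map_add] using
        hl.comp (tendsto_atTop_add_const_left _ s tendsto_id)
    exact eq_of_nhds_neBot (hcluster.clusterPt.mono hlim)
  exact ⟨p, hpN, fun t => by simpa [hconst t] using (hconst 0).symm⟩

-- For each `b` in `(c, d)`, `g` stays below a line of small positive slope through `(t, b)`.
lemma le_of_deriv_nonpos_of_mem_Ioo {g : ℝ → ℝ} (hg : Differentiable ℝ g) {a c d : ℝ}
    (hcd : c < d) (hga : g a ≤ c) (hg' : ∀ t ≥ a, g t ∈ Ioo c d → deriv g t ≤ 0) {t : ℝ}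
    (ht : a ≤ t) : g t ≤ c := by
  suffices h : ∀ b ∈ Ioo c d, g t ≤ b from
    ge_of_tendsto (tendsto_id.mono_left nhdsWithin_le_nhds)
      (mem_of_superset (Ioo_mem_nhdsGT hcd) h)
  intro b hb
  set m := (b - c) / (t - a + 1)
  have hta : 0 < t - a + 1 := by linarith
  have hm : 0 < m := div_pos (sub_pos.2 hb.1) hta
  have hmt : m * (t - a + 1) = b - c := div_mul_cancel₀ _ hta.ne'
  have hB (s : ℝ) : HasDerivAt (fun s => b + m * (s - t)) m s := by
    simpa using (((hasDerivAt_id s).sub_const t).const_mul m).const_add b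
  have hB_mem (s : ℝ) (hs : s ∈ Ico a t) : b + m * (s - t) ∈ Ioo c d := by
    constructor <;> nlinarith [hs.1, hs.2, hb.2]
  have hle := image_le_of_deriv_right_lt_deriv_boundary' (f := g) (f' := deriv g)
    hg.continuous.continuousOn (fun s _ => (hg s).hasDerivAt.hasDerivWithinAt)
    (by nlinarith) (fun s _ => (hB s).continuousAt.continuousWithinAt)
    (fun s _ => (hB s).hasDerivWithinAt)
    (fun s hs hgs => (hg' s hs.1 (hgs ▸ hB_mem s hs)).trans_lt hm) (right_mem_Icc.2 ht)
  simpa using hle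

/-! ### Liénard systems and their energies -/

/-- The Liénard system `ẋ = w - f x`, `ẇ = -δ x`, with `p = (x, w)`. -/
def lienardField (δ : ℝ) (f : ℝ → ℝ) (p : ℝ × ℝ) : ℝ × ℝ := (p.2 - f p.1, -(δ * p.1))

/-- The energy `δ x² / 2 + w² / 2` of the undamped oscillator, skewed by the cross term `h x * w`
so that it can decrease along solutions even where the damping `x * f x` vanishes. -/
noncomputable def skewEnergy (δ : ℝ) (h : ℝ → ℝ) (p : ℝ × ℝ) : ℝ :=
  δ * p.1 ^ 2 / 2 + p.2 ^ 2 / 2 - h p.1 * p.2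

/-- The derivative of `skewEnergy δ h` along solutions of the Liénard system. -/
noncomputable def skewEnergyRate (δ : ℝ) (f h : ℝ → ℝ) (p : ℝ × ℝ) : ℝ :=
  -(δ * p.1 * (f p.1 - h p.1)) - deriv h p.1 * p.2 * (p.2 - f p.1)

section Energy

variable {δ : ℝ} {f h : ℝ → ℝ}

lemma skewEnergy_zero_left (h0 : h 0 = 0) (y : ℝ) : skewEnergy δ h (0, y) = y ^ 2 / 2 := by
  simp [skewEnergy, h0]

lemma differentiable_skewEnergy (hh : Differentiable ℝ h) :
    Differentiable ℝ (skewEnergy δ h) := by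
  unfold skewEnergy
  fun_prop

lemma hasDerivAt_fst_of_lienardField {γ : ℝ → ℝ × ℝ} {t : ℝ}
    (hγ : HasDerivAt γ (lienardField δ f (γ t)) t) :
    HasDerivAt (fun t => (γ t).1) ((γ t).2 - f (γ t).1) t :=
  (hasFDerivAt_fst (𝕜 := ℝ) (p := γ t)).comp_hasDerivAt t hγ

lemma hasDerivAt_snd_of_lienardField {γ : ℝ → ℝ × ℝ} {t : ℝ}
    (hγ : HasDerivAt γ (lienardField δ f (γ t)) t) :
    HasDerivAt (fun t => (γ t).2) (-(δ * (γ t).1)) t :=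
  (hasFDerivAt_snd (𝕜 := ℝ) (p := γ t)).comp_hasDerivAt t hγ

lemma hasDerivAt_skewEnergy_comp (hh : Differentiable ℝ h) {γ : ℝ → ℝ × ℝ} {t : ℝ}
    (hγ : HasDerivAt γ (lienardField δ f (γ t)) t) :
    HasDerivAt (fun t => skewEnergy δ h (γ t)) (skewEnergyRate δ f h (γ t)) t := by
  have hx := hasDerivAt_fst_of_lienardField hγ
  have hw := hasDerivAt_snd_of_lienardField hγ
  have hhx := (hh (γ t).1).hasDerivAt.comp t hx
  refine HasDerivAt.congr_deriv (((((hx.pow 2).const_mul δ).div_const 2).add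
    ((hw.pow 2).div_const 2)).sub (hhx.mul hw)) ?_
  simp only [skewEnergyRate, comp_apply, Nat.cast_ofNat, Nat.add_one_sub_one, pow_one]
  ring

lemma abs_integral_le_of_le_inv_one_add_sq {g : ℝ → ℝ} {C : ℝ}
    (hg : ∀ s, |g s| ≤ C * (1 + s ^ 2)⁻¹) (x : ℝ) : |∫ s in (0 : ℝ)..x, g s| ≤ 2 * C := by
  have hC : 0 ≤ C := by simpa using (abs_nonneg _).trans (hg 0)
  have hint : IntervalIntegrable (fun s : ℝ => C * (1 + s ^ 2)⁻¹) MeasureTheory.volume 0 x :=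
    intervalIntegral.intervalIntegrable_inv_one_add_sq.const_mul C
  have harctan : |Real.arctan x| ≤ 2 := abs_le.2
    ⟨by linarith [Real.neg_pi_div_two_lt_arctan x, Real.pi_le_four],
      by linarith [Real.arctan_lt_pi_div_two x, Real.pi_le_four]⟩
  calc |∫ s in (0 : ℝ)..x, g s|
      ≤ |∫ s in (0 : ℝ)..x, C * (1 + s ^ 2)⁻¹| :=
        intervalIntegral.norm_integral_le_abs_of_norm_le (f := g)
          (MeasureTheory.ae_of_all _ hg) hint
    _ = C * |Real.arctan x| := by
        rw [intervalIntegral.integral_const_mul, integral_inv_one_add_sq, Real.arctan_zero,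
          sub_zero, abs_mul, abs_of_nonneg hC]
    _ ≤ 2 * C := by nlinarith

-- The factor `(1 + x²)⁻¹` of `h'` makes `h` bounded, the factor `(1 + f²)⁻¹` controls `h' f²`.
lemma exists_bounded_weight (hf : Continuous f) {e : ℝ} (he : 0 < e) :
    ∃ h : ℝ → ℝ, h 0 = 0 ∧ Differentiable ℝ h ∧ Continuous (deriv h) ∧ (∀ x, 0 < deriv h x) ∧
      (∀ x, |h x| ≤ e) ∧ ∀ x, deriv h x * f x ^ 2 ≤ e := by
  set g : ℝ → ℝ := fun x => e / 2 * ((1 + x ^ 2)⁻¹ * (1 + f x ^ 2)⁻¹) with hg_def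
  have hden (a : ℝ) : 1 + a ^ 2 ≠ 0 := by positivity
  have hinv_le (a : ℝ) : (1 + a ^ 2)⁻¹ ≤ 1 :=
    inv_le_one_of_one_le₀ (le_add_of_nonneg_right (sq_nonneg a))
  have hg : Continuous g := by fun_prop (disch := exact fun _ => hden _)
  have hg_pos (x : ℝ) : 0 < g x := by positivity
  obtain ⟨h, hh⟩ : ∃ h : ℝ → ℝ, h = fun x => ∫ s in (0 : ℝ)..x, g s := ⟨_, rfl⟩
  have hderiv (x : ℝ) : HasDerivAt h (g x) x := hh ▸ (hg.integral_hasStrictDerivAt 0 x).hasDerivAt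
  have hderiv_eq : deriv h = g := funext fun x => (hderiv x).deriv
  refine ⟨h, by simp [hh], fun x => (hderiv x).differentiableAt, hderiv_eq ▸ hg,
    fun x => hderiv_eq ▸ hg_pos x, fun x => ?_, fun x => ?_⟩
  · have hbound (s : ℝ) : |g s| ≤ e / 2 * (1 + s ^ 2)⁻¹ := by
      rw [abs_of_pos (hg_pos s)]
      exact mul_le_mul_of_nonneg_left (mul_le_of_le_one_right (by positivity) (hinv_le _))
        (by positivity)
    rw [hh]
    exact (abs_integral_le_of_le_inv_one_add_sq hbound x).trans_eq (mul_div_cancel₀ e two_ne_zero)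
  · have hf_sq : (1 + f x ^ 2)⁻¹ * f x ^ 2 ≤ 1 :=
      inv_mul_le_one_of_le₀ (le_add_of_nonneg_left zero_le_one) (by positivity)
    calc deriv h x * f x ^ 2 = e / 2 * ((1 + x ^ 2)⁻¹ * ((1 + f x ^ 2)⁻¹ * f x ^ 2)) := by
          rw [hderiv_eq, hg_def]; ring
      _ ≤ e / 2 * 1 := by
          gcongr
          exact mul_le_one₀ (hinv_le x) (by positivity) hf_sq
      _ ≤ e := by linarith

lemma isBounded_of_forall_sq_le {s : Set (ℝ × ℝ)} {X Y : ℝ}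
    (hs : ∀ p ∈ s, p.1 ^ 2 ≤ X ∧ p.2 ^ 2 ≤ Y) : Bornology.IsBounded s := by
  refine isBounded_iff_forall_norm_le.2 ⟨max √X √Y, fun p hp => ?_⟩
  exact max_le_max (Real.abs_le_sqrt (hs p hp).1) (Real.abs_le_sqrt (hs p hp).2)

lemma isBounded_ofPred_skewEnergy_le (hδ : 0 < δ) {e : ℝ} (he : ∀ x, |h x| ≤ e) (c : ℝ) :
    Bornology.IsBounded {p | skewEnergy δ h p ≤ c} := by
  refine isBounded_of_forall_sq_le (X := 2 * (c + e ^ 2) / δ) (Y := 4 * (c + e ^ 2)) fun p hp => ?_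
  have hcoercive : δ * p.1 ^ 2 / 2 + p.2 ^ 2 / 4 ≤ c + e ^ 2 := by
    have hp : δ * p.1 ^ 2 / 2 + p.2 ^ 2 / 2 - h p.1 * p.2 ≤ c := hp
    have hsq : h p.1 ^ 2 ≤ e ^ 2 := sq_le_sq' (abs_le.1 (he p.1)).1 (abs_le.1 (he p.1)).2
    linarith [sq_nonneg (p.2 / 2 - h p.1)]
  have hx : 0 ≤ δ * p.1 ^ 2 := by positivity
  refine ⟨?_, by linarith⟩
  rw [le_div_iff₀ hδ]
  linarith [sq_nonneg p.2]

lemma isBounded_ofPred_skewEnergyRate_pos (hδ : 0 < δ) (hf : Continuous f)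
    (hh : Continuous h) (hh' : Continuous (deriv h)) (hpos : ∀ x, 0 < deriv h x) {e r : ℝ}
    (he : 0 < e) (hhe : ∀ x, |h x| ≤ e) (hfe : ∀ x, deriv h x * f x ^ 2 ≤ e)
    (hout : ∀ x, r ≤ |x| → 2 * e * |x| ≤ x * f x) :
    Bornology.IsBounded {p | 0 < skewEnergyRate δ f h p} := by
  have hrate (p : ℝ × ℝ) : skewEnergyRate δ f h p ≤
      -(δ * p.1 * (f p.1 - h p.1)) + e / 2 - deriv h p.1 * p.2 ^ 2 / 2 := by
    have := mul_nonneg (hpos p.1).le (sq_nonneg (p.2 - f p.1))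
    unfold skewEnergyRate
    linarith [hfe p.1]
  set X := max r (δ⁻¹ / 2)
  have hx_lt {p : ℝ × ℝ} (hp : 0 < skewEnergyRate δ f h p) : |p.1| < X := by
    by_contra! hX
    have hdamping : δ * (e * |p.1|) ≤ δ * (p.1 * (f p.1 - h p.1)) := by
      have hxh : p.1 * h p.1 ≤ |p.1| * e :=
        (le_abs_self _).trans ((abs_mul _ _).trans_le (by gcongr; exact hhe _))
      refine mul_le_mul_of_nonneg_left ?_ hδ.le
      linarith [hout p.1 ((le_max_left _ _).trans hX)]
    have hlarge : e / 2 ≤ δ * (e * |p.1|) := by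
      calc e / 2 = δ * (e * (δ⁻¹ / 2)) := by field_simp
        _ ≤ δ * (e * |p.1|) := by gcongr; exact (le_max_right _ _).trans hX
    have := mul_nonneg (hpos p.1).le (sq_nonneg p.2)
    linarith [hrate p]
  set F : ℝ → ℝ := fun x => (e - 2 * (δ * x * (f x - h x))) / deriv h x
  have hF : Continuous F := by fun_prop (disch := exact fun x => (hpos x).ne')
  obtain ⟨Y, hY⟩ := isCompact_Icc.bddAbove_image (K := Icc (-X) X) hF.continuousOn
  refine isBounded_of_forall_sq_le (X := X ^ 2) (Y := Y) fun p hp => ?_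
  have hpX : p.1 ∈ Icc (-X) X := abs_le.1 (hx_lt hp).le
  refine ⟨sq_le_sq' hpX.1 hpX.2, le_trans ?_ (hY (mem_image_of_mem F hpX))⟩
  rw [le_div_iff₀ (hpos p.1)]
  have hp : 0 < skewEnergyRate δ f h p := hp
  linarith [hrate p]

lemma exists_skewEnergyRate_nonpos_of_lt (hh : Continuous h)
    (hbdd : Bornology.IsBounded {p | 0 < skewEnergyRate δ f h p}) :
    ∃ c, ∀ p, c < skewEnergy δ h p → skewEnergyRate δ f h p ≤ 0 := by
  have hcont : Continuous (skewEnergy δ h) := by unfold skewEnergy; fun_prop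
  obtain ⟨c, hc⟩ := hbdd.isCompact_closure.bddAbove_image hcont.continuousOn
  refine ⟨c, fun p hp => not_lt.1 fun hpos => hp.not_ge (hc ?_)⟩
  exact mem_image_of_mem _ (subset_closure hpos)

end Energy

/-! ### The half-turn map -/

section HalfTurn

/-- The section of `N` by the `w`-axis `x = 0`, on which the half-turn and return maps act. -/
abbrev AxisSection (N : Set (ℝ × ℝ)) : Type := {p : ℝ × ℝ // p ∈ N ∧ p.1 = 0}

variable {δ : ℝ} {f : ℝ → ℝ}

lemma eq_zero_of_snd_eq_const (hδ : 0 < δ) (hf0 : f 0 = 0) {γ : ℝ → ℝ × ℝ} {c : ℝ}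
    (hγ : ∀ t ≥ 0, HasDerivAt γ (lienardField δ f (γ t)) t) (hc : ∀ t, (γ t).2 = c) {t : ℝ}
    (ht : 0 < t) : γ t = 0 := by
  have hx (s : ℝ) (hs : s ≥ 0) : (γ s).1 = 0 := by
    have hw : HasDerivAt (fun s => (γ s).2) (-(δ * (γ s).1)) s :=
      hasDerivAt_snd_of_lienardField (hγ s hs)
    simp only [hc] at hw
    simpa [hδ.ne'] using hw.unique (hasDerivAt_const s c)
  have hx_zero : (fun s => (γ s).1) =ᶠ[𝓝 t] fun _ => 0 := by
    filter_upwards [lt_mem_nhds ht] with s hs using hx s hs.le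
  have hw_eq : (γ t).2 - f (γ t).1 = 0 :=
    (hasDerivAt_fst_of_lienardField (hγ t ht.le)).unique
      ((hasDerivAt_const t (0 : ℝ)).congr_of_eventuallyEq hx_zero)
  rw [hx t ht.le, hf0, sub_zero] at hw_eq
  exact Prod.ext (hx t ht.le) hw_eq

variable {φ : Flow ℝ (ℝ × ℝ)} {N : Set (ℝ × ℝ)}

-- Otherwise `p.2 * w` would decrease along the orbit forever, hence be constant on some orbit of
-- its limit set, and such an orbit rests at the origin.
lemma exists_pos_snd_mul_fst_nonpos (hδ : 0 < δ) (hf0 : f 0 = 0) (hN : IsCompact N)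
    (hN0 : 0 ∉ N) (hinv : IsForwardInvariant φ N)
    (hφ : ∀ p t, φ t p ∈ N → HasDerivAt (fun t => φ t p) (lienardField δ f (φ t p)) t)
    {p : ℝ × ℝ} (hp : p ∈ N) : ∃ t > 0, p.2 * (φ t p).1 ≤ 0 := by
  by_contra! hpos
  have hp2 : p.2 ≠ 0 := left_ne_zero_of_mul (hpos 1 one_pos).ne'
  have hw {t : ℝ} (ht : 0 ≤ t) :
      HasDerivAt (fun t => p.2 * (φ t p).2) (p.2 * -(δ * (φ t p).1)) t :=
    (hasDerivAt_snd_of_lienardField (hφ p t (hinv ht hp))).const_mul p.2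
  have hanti : AntitoneOn (fun t => p.2 * (φ t p).2) (Ici 0) := by
    refine antitoneOn_of_deriv_nonpos (convex_Ici 0)
      (fun t ht => (hw ht).continuousAt.continuousWithinAt) ?_ ?_ <;> rw [interior_Ici]
    · exact fun t ht => (hw (le_of_lt ht)).differentiableAt.differentiableWithinAt
    · intro t ht
      rw [(hw (le_of_lt ht)).deriv]
      nlinarith [hpos t ht]
  obtain ⟨q, hqN, hq⟩ := exists_mem_forall_flow_eq_of_antitoneOn φ (V := fun z => p.2 * z.2)
    (by fun_prop) hN (fun t ht => hinv ht hp) hanti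
  have hq_zero : φ 1 q = 0 := eq_zero_of_snd_eq_const hδ hf0
    (fun t ht => hφ q t (hinv ht hqN)) (fun t => mul_left_cancel₀ hp2 (hq t)) one_pos
  exact hN0 (hq_zero ▸ hinv zero_le_one hqN)

-- For a start `s` on the axis `x = 0`, the product `s.2 * x` is positive right after the start,
-- on either side of the origin, so its first zero is the next crossing of the axis.
theorem exists_continuous_halfTurn (hδ : 0 < δ) (hf : Continuous f) (hf0 : f 0 = 0)
    (hN : IsCompact N) (hN0 : 0 ∉ N) (hinv : IsForwardInvariant φ N)
    (hφ : ∀ p t, φ t p ∈ N → HasDerivAt (fun t => φ t p) (lienardField δ f (φ t p)) t) :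
    ∃ (τ : AxisSection N → ℝ) (H : AxisSection N → AxisSection N), Continuous H ∧
      ∀ s, 0 < τ s ∧ φ (τ s) s = H s ∧ s.1.2 * (H s).1.2 < 0 := by
  have snd_ne_zero {p : ℝ × ℝ} (hp : p ∈ N) (hx : p.1 = 0) : p.2 ≠ 0 := fun hw =>
    hN0 ((Prod.ext hx hw : p = 0) ▸ hp)
  have hmem (s : AxisSection N) {t : ℝ} (ht : 0 ≤ t) : φ t s ∈ N := hinv ht s.2.1
  obtain ⟨τ, hτ_cont, hτ⟩ := exists_continuous_isFirstZero
    (u := fun (s : AxisSection N) t => s.1.2 * (φ t s).1)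
    (u' := fun (s : AxisSection N) t => s.1.2 * ((φ t s).2 - f (φ t s).1))
    (by fun_prop) (by fun_prop)
    (fun s t ht => (hasDerivAt_fst_of_lienardField (hφ s t (hmem s ht))).const_mul _)
    (fun s => by simp [s.2.2])
    (fun s => by simpa [s.2.2, hf0] using mul_self_pos.2 (snd_ne_zero s.2.1 s.2.2))
    (fun s t ht hu => by
      have hs := snd_ne_zero s.2.1 s.2.2
      have hx : (φ t s).1 = 0 := (mul_eq_zero.1 hu).resolve_left hs
      simpa [hx, hf0, hs] using snd_ne_zero (hmem s ht.le) hx)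
    (fun s => exists_pos_snd_mul_fst_nonpos hδ hf0 hN hN0 hinv hφ s.2.1)
  have hx (s : AxisSection N) : (φ (τ s) s).1 = 0 :=
    (mul_eq_zero.1 (hτ s).1.2.1).resolve_left (snd_ne_zero s.2.1 s.2.2)
  refine ⟨τ, fun s => ⟨φ (τ s) s, hmem s (hτ s).1.1.le, hx s⟩, by fun_prop,
    fun s => ⟨(hτ s).1.1, rfl, ?_⟩⟩
  simpa [hx, hf0] using (hτ s).2

theorem exists_periodic_point_of_isForwardInvariant (hδ : 0 < δ) (hf : Continuous f)
    (hf0 : f 0 = 0) (hN : IsCompact N) (hinv : IsForwardInvariant φ N)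
    (hφ : ∀ p t, φ t p ∈ N → HasDerivAt (fun t => φ t p) (lienardField δ f (φ t p)) t)
    (hN0 : 0 ∉ N) {a b : ℝ} (ha : 0 < a) (hab : a ≤ b)
    (haxis : ∀ y > 0, (0, y) ∈ N ↔ y ∈ Icc a b) :
    ∃ p ∈ N, ∃ T > 0, φ T p = p ∧ ∃ t, φ t p ≠ p := by
  obtain ⟨τ, H, hH, hτ⟩ := exists_continuous_halfTurn hδ hf hf0 hN hN0 hinv hφ
  let start (y : Icc a b) : AxisSection N :=
    ⟨(0, y), (haxis y (ha.trans_le y.2.1)).2 y.2, rfl⟩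
  have hstart : Continuous start := by fun_prop
  have hreturn (y : Icc a b) : (H (H (start y))).1.2 ∈ Icc a b := by
    have hpos : 0 < (H (H (start y))).1.2 := by
      have h₁ : y * (H (start y)).1.2 < 0 := (hτ (start y)).2.2
      have h₂ : (H (start y)).1.2 < 0 := (pos_iff_neg_of_mul_neg h₁).1 (ha.trans_le y.2.1)
      exact (neg_iff_pos_of_mul_neg (hτ (H (start y))).2.2).1 h₂
    have hmem : (0, (H (H (start y))).1.2) ∈ N := by
      simpa only [← (H (H (start y))).2.2] using (H (H (start y))).2.1
    exact (haxis _ hpos).1 hmem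
  obtain ⟨y, hy⟩ : ∃ y : Icc a b, (y : ℝ) = (H (H (start y))).1.2 := by
    have : PreconnectedSpace (Icc a b) := Subtype.preconnectedSpace isPreconnected_Icc
    have hcont : Continuous fun y => (H (H (start y))).1.2 := by fun_prop
    exact intermediate_value_univ₂ continuous_subtype_val hcont
      (a := ⟨a, left_mem_Icc.2 hab⟩) (b := ⟨b, right_mem_Icc.2 hab⟩) (hreturn _).1 (hreturn _).2
  have hfix : H (H (start y)) = start y :=
    Subtype.ext (Prod.ext (H (H (start y))).2.2 hy.symm)
  refine ⟨start y, (start y).2.1, τ (H (start y)) + τ (start y), add_pos (hτ _).1 (hτ _).1,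
    by rw [φ.map_add, (hτ _).2.1, (hτ _).2.1, hfix], τ (start y), fun h => ?_⟩
  have := (hτ (start y)).2.2
  rw [← (hτ (start y)).2.1, h] at this
  exact this.not_ge (mul_self_nonneg _)

end HalfTurn

/-! ### The trapping annulus -/

/-- The annulus bounded outside by the level set of the skewed energy and inside by the level set
of the unskewed energy that cross the positive `w`-axis at heights `b` and `a`. -/
def energyAnnulus (δ : ℝ) (h : ℝ → ℝ) (a b : ℝ) : Set (ℝ × ℝ) :=
  {p | skewEnergy δ h p ≤ b ^ 2 / 2 ∧ a ^ 2 / 2 ≤ skewEnergy δ 0 p}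

section Annulus

variable {δ : ℝ} {f h : ℝ → ℝ}

lemma exists_flow_lienard (δ : ℝ) (hf : LocallyLipschitz f) {s : Set (ℝ × ℝ)}
    (hs : Bornology.IsBounded s) :
    ∃ φ : Flow ℝ (ℝ × ℝ), (∀ p, Differentiable ℝ fun t => φ t p) ∧
      ∀ p t, φ t p ∈ s → HasDerivAt (fun t => φ t p) (lienardField δ f (φ t p)) t := by
  obtain ⟨R, hR, hsR⟩ := hs.subset_closedBall_lt 0 0
  have hv : LocallyLipschitz (lienardField δ f) :=
    (LipschitzWith.prod_snd.locallyLipschitz.sub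
      (hf.comp LipschitzWith.prod_fst.locallyLipschitz)).prodMk
      ((lipschitzWith_smul δ).locallyLipschitz.comp LipschitzWith.prod_fst.locallyLipschitz).neg
  obtain ⟨K, hK⟩ := (hv.locallyLipschitzOn (s := closedBall 0 R)).exists_lipschitzOnWith_of_compact
    (isCompact_closedBall 0 R)
  obtain ⟨r, hr, hr_mem, hr_id⟩ := exists_lipschitzWith_retraction_closedBall hR.le
  obtain ⟨φ, hφd, hφ⟩ :=
    exists_flow_of_lipschitzOnWith_of_retraction hK isBounded_closedBall hr hr_mem hr_id
  exact ⟨φ, hφd, fun p t hp => hφ p t (hsR hp)⟩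

lemma exists_weight_skewEnergyRate_nonpos (hδ : 0 < δ) (hf : Continuous f)
    (hout : ∃ c > 0, ∃ r, ∀ x, r ≤ |x| → c * |x| ≤ x * f x) :
    ∃ (h : ℝ → ℝ) (c : ℝ), h 0 = 0 ∧ Differentiable ℝ h ∧
      (∀ d, Bornology.IsBounded {p | skewEnergy δ h p ≤ d}) ∧
      ∀ p, c < skewEnergy δ h p → skewEnergyRate δ f h p ≤ 0 := by
  obtain ⟨c, hc, r, hr⟩ := hout
  obtain ⟨h, h0, hh, hh', hpos, hhe, hfe⟩ := exists_bounded_weight hf (half_pos hc)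
  obtain ⟨c₀, hc₀⟩ := exists_skewEnergyRate_nonpos_of_lt hh.continuous
    (isBounded_ofPred_skewEnergyRate_pos hδ hf hh.continuous hh' hpos (half_pos hc) hhe hfe
      (by simpa only [mul_div_cancel₀ c two_ne_zero] using hr))
  exact ⟨h, c₀, h0, hh, isBounded_ofPred_skewEnergy_le hδ hhe, hc₀⟩

variable {φ : Flow ℝ (ℝ × ℝ)}

lemma isForwardInvariant_ofPred_skewEnergy_le (hh : Differentiable ℝ h)
    (hφd : ∀ p, Differentiable ℝ fun t => φ t p) {c d : ℝ} (hcd : c < d)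
    (hφ : ∀ p t, skewEnergy δ h (φ t p) ≤ d →
      HasDerivAt (fun t => φ t p) (lienardField δ f (φ t p)) t)
    (hrate : ∀ p, c < skewEnergy δ h p → skewEnergyRate δ f h p ≤ 0) :
    IsForwardInvariant φ {p | skewEnergy δ h p ≤ c} := by
  intro t ht p hp
  refine le_of_deriv_nonpos_of_mem_Ioo (g := fun t => skewEnergy δ h (φ t p))
    ((differentiable_skewEnergy hh).comp (hφd p)) hcd (by simpa using hp) (fun s _ hs => ?_) ht
  rw [(hasDerivAt_skewEnergy_comp hh (hφ p s hs.2.le)).deriv]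
  exact hrate _ hs.1

lemma isForwardInvariant_ofPred_le_skewEnergy (hδ : 0 < δ) {ε c : ℝ} (hε : 0 ≤ ε)
    (hin : ∀ x, |x| ≤ ε → x * f x ≤ 0) (hc : c ≤ δ * ε ^ 2 / 2)
    (hφd : ∀ p, Differentiable ℝ fun t => φ t p) {N : Set (ℝ × ℝ)}
    (hN : IsForwardInvariant φ N)
    (hφ : ∀ p t, φ t p ∈ N → HasDerivAt (fun t => φ t p) (lienardField δ f (φ t p)) t) :
    IsForwardInvariant φ {p | p ∈ N ∧ c ≤ skewEnergy δ 0 p} := by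
  intro t ht p hp
  refine ⟨hN ht hp.1, neg_le_neg_iff.1 ?_⟩
  refine le_of_deriv_nonpos_of_mem_Ioo (g := fun t => -skewEnergy δ 0 (φ t p))
    ((differentiable_skewEnergy (differentiable_const 0)).comp (hφd p)).neg (lt_add_one (-c))
    (by simpa using hp.2) (fun s hs hcs => ?_) ht
  have hx : |(φ s p).1| ≤ ε := by
    have henergy : δ * (φ s p).1 ^ 2 / 2 + (φ s p).2 ^ 2 / 2 < c := by
      simpa [skewEnergy] using neg_lt_neg_iff.1 hcs.1
    refine abs_le_of_sq_le_sq (le_of_mul_le_mul_left ?_ hδ) hε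
    linarith [sq_nonneg (φ s p).2]
  have hderiv : HasDerivAt (fun t => -skewEnergy δ 0 (φ t p)) (-skewEnergyRate δ f 0 (φ s p)) s :=
    (hasDerivAt_skewEnergy_comp (differentiable_const 0) (hφ p s (hN hs hp.1))).neg
  rw [hderiv.deriv]
  simpa [skewEnergyRate, mul_assoc] using mul_nonpos_of_nonneg_of_nonpos hδ.le (hin _ hx)

lemma isCompact_energyAnnulus (hh : Differentiable ℝ h)
    {b : ℝ} (hbdd : Bornology.IsBounded {p | skewEnergy δ h p ≤ b ^ 2 / 2}) (a : ℝ) :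
    IsCompact (energyAnnulus δ h a b) := by
  have hcont {g : ℝ → ℝ} (hg : Differentiable ℝ g) : Continuous (skewEnergy δ g) :=
    (differentiable_skewEnergy hg).continuous
  exact isCompact_of_isClosed_isBounded
    ((isClosed_le (hcont hh) continuous_const).inter
      (isClosed_le continuous_const (hcont (differentiable_const 0))))
    (hbdd.subset fun p hp => hp.1)

lemma zero_notMem_energyAnnulus {a : ℝ} (ha : 0 < a) (b : ℝ) : 0 ∉ energyAnnulus δ h a b := by
  have ha2 : 0 < a ^ 2 / 2 := by positivity
  exact fun h0 => h0.2.not_gt (by simpa [skewEnergy] using ha2)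

lemma mk_zero_mem_energyAnnulus_iff (h0 : h 0 = 0) {a b y : ℝ} (ha : 0 ≤ a) (hb : 0 ≤ b)
    (hy : 0 ≤ y) : (0, y) ∈ energyAnnulus δ h a b ↔ y ∈ Icc a b := by
  rw [energyAnnulus, mem_ofPred_eq, skewEnergy_zero_left h0, skewEnergy_zero_left (Pi.zero_apply 0),
    div_le_div_iff_of_pos_right two_pos, div_le_div_iff_of_pos_right two_pos, sq_le_sq₀ hy hb,
    sq_le_sq₀ ha hy, and_comm, mem_Icc]

end Annulus

lemma eq_zero_of_forall_abs_le_mul_nonpos {f : ℝ → ℝ} (hf : Continuous f) {ε : ℝ} (hε : 0 < ε)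
    (hin : ∀ x, |x| ≤ ε → x * f x ≤ 0) : f 0 = 0 := by
  refine le_antisymm (le_of_tendsto (hf.continuousWithinAt (s := Ioi 0)) ?_)
    (ge_of_tendsto (hf.continuousWithinAt (s := Iio 0)) ?_)
  · filter_upwards [Ioo_mem_nhdsGT hε] with x hx
    exact nonpos_of_mul_nonpos_right (hin x (abs_le.2 ⟨by linarith [hx.1], hx.2.le⟩)) hx.1
  · filter_upwards [Ioo_mem_nhdsLT (neg_lt_zero.2 hε)] with x hx
    exact nonneg_of_mul_nonpos_right (hin x (abs_le.2 ⟨hx.1.le, by linarith [hx.2]⟩)) hx.2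

theorem exists_periodic_orbit_lienard {δ : ℝ} {f : ℝ → ℝ} (hδ : 0 < δ) (hf : LocallyLipschitz f)
    (hin : ∃ ε > 0, ∀ x, |x| ≤ ε → x * f x ≤ 0)
    (hout : ∃ c > 0, ∃ r, ∀ x, r ≤ |x| → c * |x| ≤ x * f x) :
    ∃ T > 0, ∃ γ : ℝ → ℝ × ℝ, IsIntegralCurve γ (fun _ => lienardField δ f) ∧
      Periodic γ T ∧ ∃ t₁ t₂, γ t₁ ≠ γ t₂ := by
  obtain ⟨ε, hε, hin⟩ := hin
  have hf0 := eq_zero_of_forall_abs_le_mul_nonpos hf.continuous hε hin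
  obtain ⟨h, c₀, h0, hh, hbdd, hrate⟩ := exists_weight_skewEnergyRate_nonpos hδ hf.continuous hout
  obtain ⟨a, ha, haε⟩ : ∃ a > 0, a ^ 2 = δ * ε ^ 2 :=
    ⟨√δ * ε, by positivity, by rw [mul_pow, Real.sq_sqrt hδ.le]⟩
  obtain ⟨b, hab, hb⟩ : ∃ b, a ≤ b ∧ c₀ ≤ b ^ 2 / 2 :=
    ⟨a + |c₀| + 1, by linarith [abs_nonneg c₀], by nlinarith [abs_nonneg c₀, le_abs_self c₀]⟩
  obtain ⟨φ, hφd, hφ⟩ := exists_flow_lienard δ hf (hbdd (b ^ 2 / 2 + 1))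
  have hdisc : IsForwardInvariant φ {p | skewEnergy δ h p ≤ b ^ 2 / 2} :=
    isForwardInvariant_ofPred_skewEnergy_le hh hφd (lt_add_one _) hφ fun p hp =>
      hrate p (hb.trans_lt hp)
  have hφ_disc (p : ℝ × ℝ) (t : ℝ) (hp : skewEnergy δ h (φ t p) ≤ b ^ 2 / 2) :
      HasDerivAt (fun t => φ t p) (lienardField δ f (φ t p)) t :=
    hφ p t (le_add_of_le_of_nonneg hp zero_le_one)
  have hinv : IsForwardInvariant φ (energyAnnulus δ h a b) :=
    isForwardInvariant_ofPred_le_skewEnergy hδ hε.le hin (by rw [haε]) hφd hdisc hφ_disc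
  obtain ⟨p, hp, T, hT, hpT, t, ht⟩ := exists_periodic_point_of_isForwardInvariant hδ hf.continuous
    hf0 (isCompact_energyAnnulus hh (hbdd _) a) hinv (fun p t hp => hφ_disc p t hp.1)
    (zero_notMem_energyAnnulus ha b) ha hab
    fun y hy => mk_zero_mem_energyAnnulus_iff h0 ha.le (ha.le.trans hab) hy.le
  have hperiodic : Periodic (fun t => φ t p) T := fun t => by simp only [φ.map_add, hpT]
  refine ⟨T, hT, fun t => φ t p, fun s => hφ_disc p s ?_, hperiodic, t, 0, by simpa using ht⟩
  obtain ⟨s', hs', heq⟩ := hperiodic.exists_mem_Ico₀ hT s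
  exact (show φ s p = φ s' p from heq) ▸ hdisc hs'.1 hp.1

/-! ### The slow Stommel system -/

section Stommel

/-- The function `F_A` whose graph `μ = F_A y` is the critical manifold of the slow Stommel
system. -/
def criticalManifold (A y : ℝ) : ℝ := y + A * |1 - y| * y

/-- The damping of the slow Stommel system in the Liénard coordinates `x = y - lam` and
`w = μ - criticalManifold A lam` centred at the equilibrium. -/
def stommelDamping (A lam x : ℝ) : ℝ := criticalManifold A (lam + x) - criticalManifold A lam

variable {A lam x : ℝ}

lemma locallyLipschitz_stommelDamping (A lam : ℝ) : LocallyLipschitz (stommelDamping A lam) := by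
  have habs : LocallyLipschitz fun x => |1 - (lam + x)| :=
    (lipschitzWith_one_norm (E := ℝ)).locallyLipschitz.comp
      (g := fun x => 1 - (lam + x)) (ContDiff.locallyLipschitz (𝕂 := ℝ) (by fun_prop))
  have hpoly : LocallyLipschitz fun p : ℝ × ℝ =>
      lam + p.1 + A * p.2 * (lam + p.1) - criticalManifold A lam :=
    ContDiff.locallyLipschitz (𝕂 := ℝ) (by fun_prop)
  exact hpoly.comp (LocallyLipschitz.id.prodMk habs)

lemma stommelDamping_of_le (hlam : lam ≤ 1) (hx : x ≤ 1 - lam) :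
    stommelDamping A lam x = -((2 * A * lam - 1 - A) * x + A * x ^ 2) := by
  unfold stommelDamping criticalManifold
  rw [abs_of_nonneg (by linarith), abs_of_nonneg (by linarith)]
  ring

lemma stommelDamping_of_ge (hlam : lam ≤ 1) (hx : 1 - lam ≤ x) :
    stommelDamping A lam x =
      A * x ^ 2 + (1 - A + 2 * A * lam) * x - 2 * A * lam * (1 - lam) := by
  unfold stommelDamping criticalManifold
  rw [abs_of_nonpos (by linarith), abs_of_nonneg (by linarith)]
  ring

lemma exists_forall_abs_le_mul_stommelDamping_nonpos (hA : 0 < A)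
    (hlam₁ : 1 + A < 2 * A * lam) (hlam₂ : lam < 1) :
    ∃ ε > 0, ∀ x, |x| ≤ ε → x * stommelDamping A lam x ≤ 0 := by
  have hk : 0 < 2 * A * lam - 1 - A := by linarith
  refine ⟨min (1 - lam) ((2 * A * lam - 1 - A) / A), lt_min (sub_pos.2 hlam₂) (div_pos hk hA),
    fun x hx => ?_⟩
  obtain ⟨hx₁, hx₂⟩ := le_min_iff.1 hx
  have hslope : 0 ≤ 2 * A * lam - 1 - A + A * x := by
    rw [le_div_iff₀ hA] at hx₂
    nlinarith [neg_abs_le x]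
  rw [stommelDamping_of_le hlam₂.le ((le_abs_self x).trans hx₁)]
  linarith [mul_nonneg (sq_nonneg x) hslope]

lemma abs_le_mul_stommelDamping (hA : 0 < A) (hlam₁ : 1 + A < 2 * A * lam) (hlam₂ : lam < 1)
    (hx : 1 ≤ |x|) : |x| ≤ x * stommelDamping A lam x := by
  have hlam : 0 < lam := by nlinarith
  have hAlam : A * lam < A := mul_lt_of_lt_one_right hA hlam₂
  rcases le_abs.1 hx with hx | hx
  · rw [stommelDamping_of_ge hlam₂.le (by linarith), abs_of_nonneg (by linarith)]
    have hslope : 0 ≤ (x - 1) * (A * (x + 1) + (1 - A + 2 * A * lam)) :=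
      mul_nonneg (by linarith) (by nlinarith)
    refine le_mul_of_one_le_right (by linarith) ?_
    linarith [mul_pos hA (sq_pos_of_pos hlam)]
  · rw [stommelDamping_of_le hlam₂.le (by linarith), abs_of_nonpos (by linarith)]
    have hslope : 1 ≤ -x * (-(A * x) - (2 * A * lam - 1 - A)) :=
      one_le_mul_of_one_le_of_one_le hx (by nlinarith)
    linarith [le_mul_of_one_le_right (by linarith : 0 ≤ -x) hslope]

end Stommel

/-- For `A > 1`, `δ₀ > 0`, and `(1+A)/(2A) < λ < 1`, the slow Stommel system
`ẏ = μ - y - A|1-y|y`, `μ̇ = δ₀(λ - y)` admits a nonconstant periodic solution. -/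
theorem stommel_periodic_orbit_exists (A δ₀ lam : ℝ)
    (hA : 1 < A) (hδ : 0 < δ₀)
    (hlam1 : (1 + A) / (2 * A) < lam) (hlam2 : lam < 1) :
    ∃ T : ℝ, 0 < T ∧ ∃ γ : ℝ → ℝ × ℝ,
      (∀ t : ℝ, HasDerivAt γ
        (((γ t).2 - (γ t).1 - A * |1 - (γ t).1| * (γ t).1,
          δ₀ * (lam - (γ t).1))) t) ∧
      (∀ t : ℝ, γ (t + T) = γ t) ∧
      (∃ t₁ t₂ : ℝ, γ t₁ ≠ γ t₂) := by
  have hA0 : 0 < A := one_pos.trans hA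
  have hlam₁ : 1 + A < 2 * A * lam := (div_lt_iff₀' (by positivity)).1 hlam1
  obtain ⟨T, hT, γ, hγ, hperiodic, t₁, t₂, hne⟩ := exists_periodic_orbit_lienard hδ
    (locallyLipschitz_stommelDamping A lam)
    (exists_forall_abs_le_mul_stommelDamping_nonpos hA0 hlam₁ hlam2)
    ⟨1, one_pos, 1, fun x hx => (one_mul _).trans_le (abs_le_mul_stommelDamping hA0 hlam₁ hlam2 hx)⟩
  refine ⟨T, hT, fun t => (lam, criticalManifold A lam) + γ t, fun t => ?_,
    fun t => congrArg _ (hperiodic t), t₁, t₂, fun h => hne (add_left_cancel h)⟩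
  refine ((hγ t).const_add _).congr_deriv (Prod.ext ?_ ?_) <;>
    simp only [lienardField, stommelDamping, criticalManifold, Prod.fst_add, Prod.snd_add] <;> ring
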